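/- For any valued (t,n)-family F with valuation (a_1,...,a_n), the number of exclusive pairs of F is at least ∑_{1 ≤ i < j ≤ n} a_i·a_j. -/

import Mathlib

open Finset

/-- Number of SDRs of the family `A`. -/
def numSDR {n : ℕ} (A : Fin n → Finset ℕ) : ℕ :=
  ((Fintype.piFinset A).filter Function.Injective).card

/-- `(t,n)`-family: every nonempty union of `k` sets has at least `k + t` elements. -/
def IsTNFamily (t : ℕ) {n : ℕ} (A : Fin n → Finset ℕ) : Prop :=
  ∀ I : Finset (Fin n), I.Nonempty → I.card + t ≤ (I.biUnion A).card

/-- Valued `(t,n)`-family with valuation `a`. -/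
def IsValuedTN (t : ℕ) {n : ℕ} (a : Fin n → ℕ) (A : Fin n → Finset ℕ) : Prop :=
  (∀ i, 0 < a i) ∧ (∀ i, (A i).card = a i + t) ∧
    ∀ I : Finset (Fin n), 2 ≤ I.card → (∑ i ∈ I, a i) + t ≤ (I.biUnion A).card

/-- `I_x = {i : x ∈ A_i}`. -/
def Ix {n : ℕ} (A : Fin n → Finset ℕ) (x : ℕ) : Finset (Fin n) :=
  Finset.univ.filter fun i => x ∈ A i

/-- `{x,y}` is exclusive. -/
def Exclusive {n : ℕ} (A : Fin n → Finset ℕ) (x y : ℕ) : Prop :=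
  (Ix A x \ Ix A y).Nonempty ∧ (Ix A y \ Ix A x).Nonempty

/-- `{x,y}` is saturated. -/
def Saturated (t : ℕ) {n : ℕ} (a : Fin n → ℕ) (A : Fin n → Finset ℕ) (x y : ℕ) : Prop :=
  ∃ I : Finset (Fin n),
    I ∩ Ix A x ∩ Ix A y = ∅ ∧ (I ∩ (Ix A x \ Ix A y)).Nonempty ∧
    (I ∩ (Ix A y \ Ix A x)).Nonempty ∧ (I.biUnion A).card = (∑ i ∈ I, a i) + t

/-- The modified family `F_y^x`: replace `x` by `y` in each `A_i` with `i ∈ I_x ∩ I_y^c`. -/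
def swapFam {n : ℕ} (A : Fin n → Finset ℕ) (x y : ℕ) : Fin n → Finset ℕ :=
  fun i => if x ∈ A i ∧ y ∉ A i then insert y (A i \ {x}) else A i

def U (t n : ℕ) : ℕ := ∑ j ∈ Finset.range (t + 1), t.choose j * n.choose j * j.factorial

/-- The extremal family `F*`: `A_i* = {i} ∪ {n+1, …, n+t}` (index `i : Fin n` stands for `i+1`). -/
def Astar (t n : ℕ) : Fin n → Finset ℕ := fun i => insert ((i : ℕ) + 1) (Finset.Ioc n (n + t))

/-- `∑_{i < j} a_i a_j`. -/
def pairSum {n : ℕ} (a : Fin n → ℕ) : ℕ :=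
  ∑ p ∈ Finset.univ.filter (fun p : Fin n × Fin n => p.1 < p.2), a p.1 * a p.2

/-- Elementary symmetric polynomial `e_k(a_1,…,a_n)`. -/
def esymm {n : ℕ} (a : Fin n → ℕ) (k : ℕ) : ℕ :=
  ∑ S ∈ Finset.univ.powersetCard k, ∏ i ∈ S, a i

/-!
Passing from `A` to `swapFam A x y` replaces the labels `Ix A x`, `Ix A y` of an exclusive pair by
their intersection and union. This uncrossing strictly lowers the number of incomparable pairs of
labels, and it keeps the family valued unless `{x, y}` is saturated. So a valued family minimising
the number of exclusive pairs has only saturated ones. There, tight index sets are closed under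
intersection as long as it is nonempty, and this bounds the number of elements saturated against a
fixed `y` by the total weight of the sets missing `y`. Choosing `y` with a maximal label among the
elements outside some set leaves room for `t` elements common to all sets. These form the kernel of
a sunflower with disjoint petals of sizes `a i`, and elements of different petals are exclusive.
-/

section Counting

variable {α M L : Type*}

lemma sum_offDiag_eq_two_nsmul [LinearOrder α] [AddCommMonoid M] (s : Finset α) {f : α → α → M}
    (hf : ∀ x y, f x y = f y x) :
    ∑ p ∈ s.offDiag, f p.1 p.2 = 2 • ∑ p ∈ s ×ˢ s with p.1 < p.2, f p.1 p.2 := by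
  have hsplit : s.offDiag = {p ∈ s ×ˢ s | p.1 < p.2} ∪ {p ∈ s ×ˢ s | p.2 < p.1} := by grind
  have hdisj : Disjoint {p ∈ s ×ˢ s | p.1 < p.2} {p ∈ s ×ˢ s | p.2 < p.1} := by
    grind [disjoint_left]
  have hswap : ∑ p ∈ s ×ˢ s with p.2 < p.1, f p.1 p.2 = ∑ p ∈ s ×ˢ s with p.1 < p.2, f p.1 p.2 :=
    sum_nbij' Prod.swap Prod.swap (by grind) (by grind) (by simp) (by simp)
      fun p _ ↦ hf p.1 p.2
  rw [hsplit, sum_union hdisj, hswap, two_nsmul]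

lemma two_mul_pairSum {n : ℕ} (a : Fin n → ℕ) :
    2 * pairSum a = ∑ p ∈ (univ : Finset (Fin n)).offDiag, a p.1 * a p.2 := by
  rw [sum_offDiag_eq_two_nsmul univ (f := fun i j ↦ a i * a j) fun i j ↦ mul_comm _ _,
    univ_product_univ, smul_eq_mul, pairSum]

/-- The ordered pairs of elements of `V` whose labels under `S` are incomparable. For `S = Ix A`
these are the exclusive pairs, each counted in both orders. -/
def incompPairs [LE L] [DecidableLE L] (S : α → L) (V : Finset α) : Finset (α × α) :=
  {p ∈ V ×ˢ V | IncompRel (· ≤ ·) (S p.1) (S p.2)}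

lemma card_incompPairs_eq_two_mul [LinearOrder α] [Preorder L] [DecidableLE L] (S : α → L)
    (V : Finset α) :
    #(incompPairs S V) =
      2 * #{p ∈ V ×ˢ V | p.1 < p.2 ∧ IncompRel (· ≤ ·) (S p.1) (S p.2)} := by
  have hoff : incompPairs S V = {p ∈ V.offDiag | IncompRel (· ≤ ·) (S p.1) (S p.2)} := by
    grind [incompPairs, IncompRel]
  rw [hoff, ← filter_filter, card_filter, card_filter,
    sum_offDiag_eq_two_nsmul V (f := fun x y ↦ if IncompRel (· ≤ ·) (S x) (S y) then 1 else 0)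
      (by simp [incompRel_comm]), smul_eq_mul]

lemma card_incompPairs_insert [DecidableEq α] [Preorder L] [DecidableLE L] (S : α → L)
    {V : Finset α} {x : α} (hx : x ∉ V) :
    #(incompPairs S (insert x V)) =
      #(incompPairs S V) + 2 * #{u ∈ V | IncompRel (· ≤ ·) (S x) (S u)} := by
  have hself : ¬ IncompRel (· ≤ ·) (S x) (S x) := le_rfl.not_incompRel
  simp only [incompPairs, card_filter, sum_product, sum_insert hx,
    sum_add_distrib, incompRel_comm (b := S x), hself, if_false]
  ring

lemma card_incompRel_inf_add_card_incompRel_sup_le [Lattice L] [DecidableLE L] (S : α → L)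
    (V : Finset α) (X Y : L) :
    #{u ∈ V | IncompRel (· ≤ ·) (X ⊓ Y) (S u)} + #{u ∈ V | IncompRel (· ≤ ·) (X ⊔ Y) (S u)} ≤
      #{u ∈ V | IncompRel (· ≤ ·) X (S u)} + #{u ∈ V | IncompRel (· ≤ ·) Y (S u)} := by
  have hcmp (Z : L) : (X ≤ Z ∨ Y ≤ Z → X ⊓ Y ≤ Z) ∧ (Z ≤ X ∨ Z ≤ Y → Z ≤ X ⊔ Y) :=
    ⟨fun h ↦ h.elim inf_le_of_left_le inf_le_of_right_le,
      fun h ↦ h.elim le_sup_of_le_left le_sup_of_le_right⟩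
  simp only [card_filter, ← sum_add_distrib]
  refine sum_le_sum fun u _ ↦ ?_
  grind [IncompRel, le_inf_iff, sup_le_iff]

lemma card_incompPairs_lt_of_uncross [Lattice L] [DecidableLE L] {S S' : α → L}
    {V : Finset α} {x y : α} (hx : x ∈ V) (hy : y ∈ V) (hxy : IncompRel (· ≤ ·) (S x) (S y))
    (hS'x : S' x = S x ⊓ S y) (hS'y : S' y = S x ⊔ S y)
    (hS' : ∀ z, z ≠ x → z ≠ y → S' z = S z) :
    #(incompPairs S' V) < #(incompPairs S V) := by
  classical
  obtain ⟨W, hyW, hxW, rfl⟩ : ∃ W, y ∉ W ∧ x ∉ insert y W ∧ insert x (insert y W) = V :=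
    ⟨(V.erase x).erase y, by grind, by grind [IncompRel], by grind⟩
  have hSW : ∀ u ∈ W, S' u = S u := fun u hu ↦ hS' u (by grind) (by grind)
  have hcomp : ¬ IncompRel (· ≤ ·) (S' x) (S' y) := by
    rw [hS'x, hS'y]; exact inf_le_sup.not_incompRel
  have hW : incompPairs S' W = incompPairs S W := by
    grind [incompPairs]
  have hdeg (X : L) : {u ∈ W | IncompRel (· ≤ ·) X (S' u)} = {u ∈ W | IncompRel (· ≤ ·) X (S u)} :=
    filter_congr fun u hu ↦ by rw [hSW u hu]
  have huncross := card_incompRel_inf_add_card_incompRel_sup_le S W (S x) (S y)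
  rw [card_incompPairs_insert S' hxW, card_incompPairs_insert S hxW,
    card_incompPairs_insert S' hyW, card_incompPairs_insert S hyW, filter_insert,
    filter_insert, if_neg hcomp, if_pos hxy, card_insert_of_notMem (by grind),
    hW, hdeg, hdeg, hS'x, hS'y]
  omega

end Counting

section Surplus

variable {ι α : Type*} [DecidableEq α] {t : ℕ} {a : ι → ℕ} {A : ι → Finset α}

/-- Hall's condition weighted by `a`, with surplus `t`. Unlike the last clause of `IsValuedTN` it
also speaks about single sets. -/
def HasSurplus (t : ℕ) (a : ι → ℕ) (A : ι → Finset α) : Prop :=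
  ∀ I : Finset ι, I.Nonempty → ∑ i ∈ I, a i + t ≤ #(I.biUnion A)

/-- The index set `I` attains equality in `HasSurplus t a A`. -/
def IsTight (t : ℕ) (a : ι → ℕ) (A : ι → Finset α) (I : Finset ι) : Prop :=
  #(I.biUnion A) = ∑ i ∈ I, a i + t

/-- The sets indexed by `I` cover both `x` and `y`, but none of them contains both: the condition
of `Saturated` on its index set, except for tightness. -/
def Separates (A : ι → Finset α) (I : Finset ι) (x y : α) : Prop :=
  x ∈ I.biUnion A ∧ y ∈ I.biUnion A ∧ ∀ i ∈ I, x ∈ A i → y ∉ A i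

lemma HasSurplus.card_sdiff_le [DecidableEq ι] (hA : HasSurplus t a A) {I J : Finset ι}
    (hI : IsTight t a A I) (hJ : J.Nonempty) (hJI : J ⊆ I) :
    #(I.biUnion A \ J.biUnion A) ≤ ∑ i ∈ I \ J, a i := by
  have hcard := card_sdiff_add_card_eq_card (biUnion_subset_biUnion_of_subset_left A hJI)
  have hsum := sum_sdiff (f := a) hJI
  have hbound := hA J hJ
  rw [IsTight] at hI
  omega

/-- By submodularity of `I ↦ #(I.biUnion A)`. -/
lemma HasSurplus.card_biUnion_inter_biUnion_le [DecidableEq ι] (hA : HasSurplus t a A)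
    {I J : Finset ι} (hI : IsTight t a A I) (hJ : IsTight t a A J) (hIJ : (I ∪ J).Nonempty) :
    #(I.biUnion A ∩ J.biUnion A) ≤ ∑ i ∈ I ∩ J, a i + t := by
  have hcard := card_union_add_card_inter (I.biUnion A) (J.biUnion A)
  have hsum := sum_union_inter (s₁ := I) (s₂ := J) (f := a)
  have hbound := hA (I ∪ J) hIJ
  rw [union_biUnion] at hbound
  rw [IsTight] at hI hJ
  omega

lemma HasSurplus.biUnion_inter [DecidableEq ι] (hA : HasSurplus t a A) {I J : Finset ι}
    (hI : IsTight t a A I) (hJ : IsTight t a A J) (hIJ : (I ∩ J).Nonempty) :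
    (I ∩ J).biUnion A = I.biUnion A ∩ J.biUnion A :=
  eq_of_subset_of_card_le (by grind) <|
    (hA.card_biUnion_inter_biUnion_le hI hJ (hIJ.mono inter_subset_union)).trans (hA _ hIJ)

lemma HasSurplus.isTight_inter [DecidableEq ι] (hA : HasSurplus t a A) {I J : Finset ι}
    (hI : IsTight t a A I) (hJ : IsTight t a A J) (hIJ : (I ∩ J).Nonempty) :
    IsTight t a A (I ∩ J) := by
  refine le_antisymm ?_ (hA _ hIJ)
  rw [hA.biUnion_inter hI hJ hIJ]
  exact hA.card_biUnion_inter_biUnion_le hI hJ (hIJ.mono inter_subset_union)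

open scoped Classical in
/-- The indices of `I` that appear in no smaller tight set covering `y`, those of the sets
containing `y` excepted. -/
noncomputable def tightCore (t : ℕ) (a : ι → ℕ) (A : ι → Finset α) (y : α) (I : Finset ι) :
    Finset ι :=
  {i ∈ I | y ∉ A i ∧ ∀ J ⊂ I, IsTight t a A J → y ∈ J.biUnion A → i ∉ J}

lemma mem_tightCore {y : α} {I : Finset ι} {i : ι} :
    i ∈ tightCore t a A y I ↔
      i ∈ I ∧ y ∉ A i ∧ ∀ J ⊂ I, IsTight t a A J → y ∈ J.biUnion A → i ∉ J := by
  simp only [tightCore, mem_filter]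

lemma HasSurplus.disjoint_tightCore (hA : HasSurplus t a A) {y : α} {I J : Finset ι}
    (hI : IsTight t a A I) (hyI : y ∈ I.biUnion A) (hJ : IsTight t a A J) (hyJ : y ∈ J.biUnion A)
    (hIJ : I ≠ J) : Disjoint (tightCore t a A y I) (tightCore t a A y J) := by
  classical
  refine disjoint_left.2 fun i hiI hiJ ↦ ?_
  rw [mem_tightCore] at hiI hiJ
  have hi : i ∈ I ∩ J := mem_inter.2 ⟨hiI.1, hiJ.1⟩
  have htight := hA.isTight_inter hI hJ ⟨i, hi⟩
  have hy : y ∈ (I ∩ J).biUnion A := by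
    rw [hA.biUnion_inter hI hJ ⟨i, hi⟩]; exact mem_inter.2 ⟨hyI, hyJ⟩
  have hleft : I ∩ J = I := eq_of_subset_of_not_ssubset inter_subset_left
    fun h ↦ hiI.2.2 _ h htight hy hi
  have hright : I ∩ J = J := eq_of_subset_of_not_ssubset inter_subset_right
    fun h ↦ hiJ.2.2 _ h htight hy hi
  exact hIJ (hleft.symm.trans hright)

lemma HasSurplus.card_sdiff_tightCore_le [DecidableEq ι] (hA : HasSurplus t a A) {y : α}
    {I : Finset ι} (hI : IsTight t a A I) (hy : y ∈ I.biUnion A) :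
    #(I.biUnion A \ (I \ tightCore t a A y I).biUnion A) ≤ ∑ i ∈ tightCore t a A y I, a i := by
  have hcore : tightCore t a A y I ⊆ I := fun i hi ↦ (mem_tightCore.1 hi).1
  obtain ⟨i, hi, hyi⟩ := mem_biUnion.1 hy
  have hne : (I \ tightCore t a A y I).Nonempty :=
    ⟨i, mem_sdiff.2 ⟨hi, fun hcore ↦ (mem_tightCore.1 hcore).2.1 hyi⟩⟩
  simpa only [Finset.sdiff_sdiff_eq_self hcore] using hA.card_sdiff_le hI hne sdiff_subset

/-- A minimal tight set separating `x` from `y` does it. -/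
lemma exists_mem_sdiff_tightCore [DecidableEq ι] {x y : α}
    (hxy : ∃ I, IsTight t a A I ∧ Separates A I x y) :
    ∃ I, IsTight t a A I ∧ y ∈ I.biUnion A ∧
      x ∈ I.biUnion A \ (I \ tightCore t a A y I).biUnion A := by
  obtain ⟨I, ⟨hI, hx, hy, hsep⟩, hmin⟩ := exists_minimal_of_wellFoundedLT _ hxy
  refine ⟨I, hI, hy, mem_sdiff.2 ⟨hx, fun hx' ↦ ?_⟩⟩
  obtain ⟨i, hi, hxi⟩ := mem_biUnion.1 hx'
  obtain ⟨hiI, hicore⟩ := mem_sdiff.1 hi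
  obtain ⟨J, hJI, hJ, hyJ, hiJ⟩ : ∃ J ⊂ I, IsTight t a A J ∧ y ∈ J.biUnion A ∧ i ∈ J := by
    by_contra! hJ
    exact hicore (mem_tightCore.2 ⟨hiI, hsep i hiI hxi, hJ⟩)
  have hJsep : Separates A J x y :=
    ⟨mem_biUnion.2 ⟨i, hiJ, hxi⟩, hyJ, fun j hj ↦ hsep j (hJI.subset hj)⟩
  exact hJI.not_subset (hmin ⟨hJ, hJsep⟩ hJI.subset)

lemma HasSurplus.card_le_sum_of_separates [Fintype ι] (hA : HasSurplus t a A) {y : α}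
    {S : Finset α} (hS : ∀ x ∈ S, ∃ I, IsTight t a A I ∧ Separates A I x y) :
    #S ≤ ∑ i with y ∉ A i, a i := by
  classical
  let T : Finset (Finset ι) := {I | IsTight t a A I ∧ y ∈ I.biUnion A}
  have hT {I : Finset ι} (h : I ∈ T) : IsTight t a A I ∧ y ∈ I.biUnion A := (mem_filter.1 h).2
  have hcover : S ⊆ T.biUnion fun I ↦ I.biUnion A \ (I \ tightCore t a A y I).biUnion A := by
    intro x hx
    obtain ⟨I, hI, hy, hxI⟩ := exists_mem_sdiff_tightCore (hS x hx)
    exact mem_biUnion.2 ⟨I, mem_filter.2 ⟨mem_univ I, hI, hy⟩, hxI⟩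
  calc #S ≤ ∑ I ∈ T, #(I.biUnion A \ (I \ tightCore t a A y I).biUnion A) :=
        (card_le_card hcover).trans card_biUnion_le
    _ ≤ ∑ I ∈ T, ∑ i ∈ tightCore t a A y I, a i :=
        sum_le_sum fun I hI ↦ hA.card_sdiff_tightCore_le (hT hI).1 (hT hI).2
    _ = ∑ i ∈ T.biUnion (tightCore t a A y), a i :=
        (sum_biUnion fun I hI J hJ ↦
          hA.disjoint_tightCore (hT hI).1 (hT hI).2 (hT hJ).1 (hT hJ).2).symm
    _ ≤ ∑ i with y ∉ A i, a i := sum_le_sum_of_subset (by grind [mem_tightCore])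

lemma HasSurplus.pairwise_disjoint_sdiff (hA : HasSurplus t a A) (hcard : ∀ i, #(A i) ≤ a i + t)
    {F : Finset α} (hF : t ≤ #F) (hFA : ∀ i, F ⊆ A i) :
    Pairwise (Function.onFun Disjoint fun i ↦ A i \ F) := by
  classical
  intro i j hij
  have hunion : a i + a j + t ≤ #(A i ∪ A j) := by
    simpa [sum_pair hij, biUnion_insert] using hA {i, j} (insert_nonempty ..)
  have hinter : A i ∩ A j ⊆ F := by
    have hcount := card_union_add_card_inter (A i) (A j)
    have hi := hcard i
    have hj := hcard j
    exact (eq_of_subset_of_card_le (subset_inter (hFA i) (hFA j)) (by omega)).ge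
  exact disjoint_left.2 fun x hxi hxj ↦ (mem_sdiff.1 hxi).2 <|
    hinter (mem_inter.2 ⟨(mem_sdiff.1 hxi).1, (mem_sdiff.1 hxj).1⟩)

end Surplus

section Swap

variable {t n : ℕ} {a : Fin n → ℕ} {A : Fin n → Finset ℕ} {x y z : ℕ} {i : Fin n}

lemma mem_Ix : i ∈ Ix A x ↔ x ∈ A i := by
  simp [Ix]

lemma left_mem_swapFam : x ∈ swapFam A x y i ↔ x ∈ A i ∧ y ∈ A i := by
  grind [swapFam]

lemma right_mem_swapFam : y ∈ swapFam A x y i ↔ x ∈ A i ∨ y ∈ A i := by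
  grind [swapFam]

lemma mem_swapFam_of_ne (hx : z ≠ x) (hy : z ≠ y) : z ∈ swapFam A x y i ↔ z ∈ A i := by
  grind [swapFam]

lemma card_swapFam (A : Fin n → Finset ℕ) (x y : ℕ) (i : Fin n) :
    #(swapFam A x y i) = #(A i) := by
  rw [swapFam]
  split_ifs with h
  · rw [sdiff_singleton_eq_erase, card_insert_of_notMem (by grind), card_erase_add_one h.1]
  · rfl

lemma erase_biUnion_subset_biUnion_swapFam (A : Fin n → Finset ℕ) (x y : ℕ)
    (I : Finset (Fin n)) : (I.biUnion A).erase x ⊆ I.biUnion (swapFam A x y) := by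
  grind [swapFam]

lemma card_biUnion_le_card_biUnion_swapFam {I : Finset (Fin n)} (hI : ¬ Separates A I x y) :
    #(I.biUnion A) ≤ #(I.biUnion (swapFam A x y)) := by
  have herase := erase_biUnion_subset_biUnion_swapFam A x y I
  by_cases hx : x ∈ I.biUnion A → x ∈ I.biUnion (swapFam A x y)
  · exact card_le_card fun z hz ↦ by grind
  · push Not at hx
    have hy : y ∉ I.biUnion A := fun hy ↦ hI ⟨hx.1, hy, fun i hi hxi hyi ↦
      hx.2 (mem_biUnion.2 ⟨i, hi, left_mem_swapFam.2 ⟨hxi, hyi⟩⟩)⟩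
    have hy' : y ∈ I.biUnion (swapFam A x y) := by
      obtain ⟨i, hi, hxi⟩ := mem_biUnion.1 hx.1
      exact mem_biUnion.2 ⟨i, hi, right_mem_swapFam.2 (.inl hxi)⟩
    calc #(I.biUnion A) = #(insert y ((I.biUnion A).erase x)) := by
          rw [card_insert_of_notMem (by grind), card_erase_add_one hx.1]
      _ ≤ #(I.biUnion (swapFam A x y)) := card_le_card (insert_subset hy' herase)

protected lemma HasSurplus.swapFam (hA : HasSurplus t a A)
    (hsep : ∀ I, IsTight t a A I → ¬ Separates A I x y) : HasSurplus t a (swapFam A x y) := by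
  intro I hI
  have hbound := hA I hI
  by_cases hIsep : Separates A I x y
  · have hne : #(I.biUnion A) ≠ ∑ i ∈ I, a i + t := fun h ↦ hsep I h hIsep
    have hcard := card_le_card (erase_biUnion_subset_biUnion_swapFam A x y I)
    rw [card_erase_of_mem hIsep.1] at hcard
    omega
  · exact hbound.trans (card_biUnion_le_card_biUnion_swapFam hIsep)

lemma IsValuedTN.hasSurplus (hA : IsValuedTN t a A) : HasSurplus t a A := by
  intro I hI
  obtain hI2 | hI1 := le_or_gt 2 #I
  · exact hA.2.2 I hI2
  · obtain ⟨i, rfl⟩ := card_eq_one.1 (show #I = 1 by have := hI.card_pos; omega)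
    simp [hA.2.1 i]

lemma saturated_iff :
    Saturated t a A x y ↔ ∃ I, IsTight t a A I ∧ Separates A I x y := by
  simp only [Saturated, IsTight, Separates, eq_empty_iff_forall_notMem, Finset.Nonempty,
    mem_inter, mem_sdiff, mem_Ix, mem_biUnion]
  refine exists_congr fun I ↦ ?_
  grind

lemma exclusive_iff_incompRel : Exclusive A x y ↔ IncompRel (· ≤ ·) (Ix A x) (Ix A y) := by
  simp only [Exclusive, sdiff_nonempty, IncompRel]

protected lemma IsValuedTN.swapFam (hA : IsValuedTN t a A) (hxy : ¬ Saturated t a A x y) :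
    IsValuedTN t a (swapFam A x y) := by
  have hsep : ∀ I, IsTight t a A I → ¬ Separates A I x y := by simpa [saturated_iff] using hxy
  exact ⟨hA.1, fun i ↦ (card_swapFam A x y i).trans (hA.2.1 i), fun I hI ↦
    hA.hasSurplus.swapFam hsep I (card_pos.1 (by omega))⟩

lemma card_incompPairs_swapFam_lt {V : Finset ℕ} (hx : x ∈ V) (hy : y ∈ V)
    (hxy : Exclusive A x y) :
    #(incompPairs (Ix (swapFam A x y)) V) < #(incompPairs (Ix A) V) := by
  refine card_incompPairs_lt_of_uncross hx hy (exclusive_iff_incompRel.1 hxy) ?_ ?_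
    fun z hzx hzy ↦ ?_
  · ext i
    simp only [mem_Ix, left_mem_swapFam, inf_eq_inter, mem_inter]
  · ext i
    simp only [mem_Ix, right_mem_swapFam, sup_eq_union, mem_union]
  · ext i
    simp only [mem_Ix, mem_swapFam_of_ne hzx hzy]

lemma IsValuedTN.exists_forall_saturated (hA : IsValuedTN t a A) {V : Finset ℕ}
    (hV : univ.biUnion A ⊆ V) :
    ∃ B, IsValuedTN t a B ∧ univ.biUnion B ⊆ V ∧
      #(incompPairs (Ix B) V) ≤ #(incompPairs (Ix A) V) ∧
        ∀ x y, Exclusive B x y → Saturated t a B x y := by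
  obtain ⟨B, ⟨hB, hBV⟩, hmin⟩ := exists_minimalFor_of_wellFoundedLT
    (fun B : Fin n → Finset ℕ ↦ IsValuedTN t a B ∧ univ.biUnion B ⊆ V)
    (fun B ↦ #(incompPairs (Ix B) V)) ⟨A, hA, hV⟩
  have hle {C} (hC : IsValuedTN t a C) (hCV : univ.biUnion C ⊆ V) :
      #(incompPairs (Ix B) V) ≤ #(incompPairs (Ix C) V) :=
    (le_total _ _).elim id (hmin ⟨hC, hCV⟩)
  refine ⟨B, hB, hBV, hle hA hV, fun x y hxy ↦ ?_⟩
  by_contra hsat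
  have hx : x ∈ V := by
    obtain ⟨i, hi⟩ := hxy.1
    exact hBV (mem_biUnion.2 ⟨i, mem_univ i, mem_Ix.1 (mem_sdiff.1 hi).1⟩)
  have hy : y ∈ V := by
    obtain ⟨i, hi⟩ := hxy.2
    exact hBV (mem_biUnion.2 ⟨i, mem_univ i, mem_Ix.1 (mem_sdiff.1 hi).1⟩)
  have hswapV : univ.biUnion (swapFam B x y) ⊆ V := by grind [swapFam]
  exact (card_incompPairs_swapFam_lt hx hy hxy).not_ge (hle (hB.swapFam hsat) hswapV)

end Swap

section Saturated

variable {t n : ℕ} {a : Fin n → ℕ} {A : Fin n → Finset ℕ}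

/-- If `Ix A y` is largest among the labels of elements missing from some set, then every such
element of a set missing `y` forms an exclusive pair with `y`. -/
lemma HasSurplus.le_card_common [Nonempty (Fin n)] (hA : HasSurplus t a A)
    (hsat : ∀ x y, Exclusive A x y → Saturated t a A x y) :
    t ≤ #{x ∈ univ.biUnion A | ∀ i, x ∈ A i} := by
  by_cases hall : ∀ x ∈ univ.biUnion A, ∀ i, x ∈ A i
  · rw [filter_true_of_mem hall]
    exact le_of_add_le_right (hA univ univ_nonempty)
  obtain ⟨y, hy, hmax⟩ := exists_max_image {x ∈ univ.biUnion A | ¬ ∀ i, x ∈ A i}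
    (fun x ↦ #(Ix A x)) (by simpa only [filter_nonempty_iff, not_forall, exists_prop] using hall)
  let C : Finset (Fin n) := {i | y ∉ A i}
  have hC : C.Nonempty := by
    simpa only [C, filter_nonempty_iff, mem_univ, true_and, not_forall] using (mem_filter.1 hy).2
  have hsep : ∀ x ∈ {x ∈ C.biUnion A | ¬ ∀ i, x ∈ A i},
      ∃ I, IsTight t a A I ∧ Separates A I x y := by
    intro x hx
    obtain ⟨hxC, hxall⟩ := mem_filter.1 hx
    obtain ⟨i, hi, hxi⟩ := mem_biUnion.1 hxC
    have hyi : i ∉ Ix A y := by simpa only [mem_Ix] using (mem_filter.1 hi).2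
    refine saturated_iff.1 (hsat x y ⟨⟨i, mem_sdiff.2 ⟨mem_Ix.2 hxi, hyi⟩⟩, ?_⟩)
    refine sdiff_nonempty.2 fun hyx ↦ hyi ?_
    have hle := hmax x (mem_filter.2 ⟨mem_biUnion.2 ⟨i, mem_univ i, hxi⟩, hxall⟩)
    exact eq_of_subset_of_card_le hyx hle ▸ mem_Ix.2 hxi
  have hnoncommon : #{x ∈ C.biUnion A | ¬ ∀ i, x ∈ A i} ≤ ∑ i ∈ C, a i :=
    hA.card_le_sum_of_separates hsep
  have hcommon : #{x ∈ C.biUnion A | ∀ i, x ∈ A i} ≤ #{x ∈ univ.biUnion A | ∀ i, x ∈ A i} :=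
    card_le_card (filter_subset_filter _ (biUnion_subset_biUnion_of_subset_left A (subset_univ C)))
  have hsplit := card_filter_add_card_filter_not (s := C.biUnion A) fun x ↦ ∀ i, x ∈ A i
  have hbound := hA C hC
  omega

lemma two_mul_pairSum_le_card_incompPairs {F V : Finset ℕ} (hV : univ.biUnion A ⊆ V)
    (hcard : ∀ i, a i ≤ #(A i \ F))
    (hdisj : Pairwise (Function.onFun Disjoint fun i ↦ A i \ F)) :
    2 * pairSum a ≤ #(incompPairs (Ix A) V) := by
  have hcells : Set.PairwiseDisjoint ((univ : Finset (Fin n)).offDiag : Set (Fin n × Fin n))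
      fun p ↦ (A p.1 \ F) ×ˢ (A p.2 \ F) := by
    intro p _ q _ hpq
    refine disjoint_product.2 ?_
    by_cases h : p.1 = q.1
    · exact .inr (hdisj fun h' ↦ hpq (Prod.ext h h'))
    · exact .inl (hdisj h)
  have hexcl : ((univ : Finset (Fin n)).offDiag.biUnion fun p ↦ (A p.1 \ F) ×ˢ (A p.2 \ F)) ⊆
      incompPairs (Ix A) V := by
    rintro ⟨x, y⟩ hcell
    obtain ⟨⟨i, j⟩, hij, hmem⟩ := mem_biUnion.1 hcell
    obtain ⟨hx, hy⟩ := mem_product.1 hmem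
    have hpetals : Disjoint (A i \ F) (A j \ F) := hdisj (mem_offDiag.1 hij).2.2
    have hxj : x ∉ A j := fun h ↦ disjoint_left.1 hpetals hx (mem_sdiff.2 ⟨h, (mem_sdiff.1 hx).2⟩)
    have hyi : y ∉ A i := fun h ↦ disjoint_left.1 hpetals (mem_sdiff.2 ⟨h, (mem_sdiff.1 hy).2⟩) hy
    have hxi : x ∈ A i := (mem_sdiff.1 hx).1
    have hyj : y ∈ A j := (mem_sdiff.1 hy).1
    have hxV : x ∈ V := hV (mem_biUnion.2 ⟨i, mem_univ i, hxi⟩)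
    have hyV : y ∈ V := hV (mem_biUnion.2 ⟨j, mem_univ j, hyj⟩)
    have hxy : Exclusive A x y :=
      ⟨⟨i, by simp only [mem_sdiff, mem_Ix, hxi, hyi, not_false_eq_true, and_self]⟩,
        ⟨j, by simp only [mem_sdiff, mem_Ix, hxj, hyj, not_false_eq_true, and_self]⟩⟩
    exact mem_filter.2 ⟨mem_product.2 ⟨hxV, hyV⟩, exclusive_iff_incompRel.1 hxy⟩
  calc 2 * pairSum a = ∑ p ∈ (univ : Finset (Fin n)).offDiag, a p.1 * a p.2 := two_mul_pairSum a
    _ ≤ ∑ p ∈ (univ : Finset (Fin n)).offDiag, #((A p.1 \ F) ×ˢ (A p.2 \ F)) :=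
        sum_le_sum fun p _ ↦ by
          rw [card_product]; exact Nat.mul_le_mul (hcard p.1) (hcard p.2)
    _ = #((univ : Finset (Fin n)).offDiag.biUnion fun p ↦ (A p.1 \ F) ×ˢ (A p.2 \ F)) :=
        (card_biUnion hcells).symm
    _ ≤ #(incompPairs (Ix A) V) := card_le_card hexcl

lemma IsValuedTN.two_mul_pairSum_le_of_saturated (hA : IsValuedTN t a A) {V : Finset ℕ}
    (hV : univ.biUnion A ⊆ V) (hsat : ∀ x y, Exclusive A x y → Saturated t a A x y) :
    2 * pairSum a ≤ #(incompPairs (Ix A) V) := by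
  obtain hn | hn := isEmpty_or_nonempty (Fin n)
  · simp [pairSum]
  obtain ⟨F, hF, hFcard⟩ := exists_subset_card_eq (hA.hasSurplus.le_card_common hsat)
  have hFA (i : Fin n) : F ⊆ A i := fun x hx ↦ (mem_filter.1 (hF hx)).2 i
  have hpetal (i : Fin n) : a i ≤ #(A i \ F) := by
    rw [card_sdiff_of_subset (hFA i), hA.2.1, hFcard, Nat.add_sub_cancel]
  exact two_mul_pairSum_le_card_incompPairs hV hpetal <|
    hA.hasSurplus.pairwise_disjoint_sdiff (fun i ↦ (hA.2.1 i).le) hFcard.ge hFA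

end Saturated

open scoped Classical in
theorem exclusive_pairs_lower (t n : ℕ) (a : Fin n → ℕ) (A : Fin n → Finset ℕ)
    (hF : IsValuedTN t a A) :
    pairSum a ≤
      (((Finset.univ.biUnion A) ×ˢ (Finset.univ.biUnion A)).filter
        (fun p => p.1 < p.2 ∧ Exclusive A p.1 p.2)).card := by
  obtain ⟨B, hB, hBV, hBA, hsat⟩ := hF.exists_forall_saturated subset_rfl
  have hle := (hB.two_mul_pairSum_le_of_saturated hBV hsat).trans hBA
  rw [card_incompPairs_eq_two_mul] at hle
  simp only [exclusive_iff_incompRel]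
  convert Nat.le_of_mul_le_mul_left hle two_pos
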